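/- arXiv:2303.01721 — 2 statements merged into one kernel-verified Lean document; each statement's English description precedes it below -/
import Mathlib

section
/- Let 𝒞 ⊆ ℤ_m^n be a linear (n, m^k, d) (𝕡,π)-code and let I be an ideal of 𝕡 with full count. Then the following are equivalent: (1) 𝒞 is an I-perfect code; (2) Σ_{i∈I*} k_i = n − k and |𝒞 ∩ B_I| = 1; (3) |𝒞 ∩ B_I(u)| = 1 for all u ∈ ℤ_m^n. -/
open scoped Classical

noncomputable section

/-- Lee weight of an element of `ZMod m`. -/
def leeWt (m : ℕ) (a : ZMod m) : ℕ := min a.val (m - a.val)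

/-- Block Lee weight of the `i`-th block of `u`. -/
def blockWt (m s : ℕ) (π : Fin s → ℕ) (u : ∀ i : Fin s, Fin (π i) → ZMod m)
    (i : Fin s) : ℕ :=
  Finset.univ.sup fun t => leeWt m (u i t)

/-- The `(𝕡,π)`-weight of `u`. -/
def pomsetWt (m s : ℕ) (P : PartialOrder (Fin s)) (π : Fin s → ℕ)
    (u : ∀ i : Fin s, Fin (π i) → ZMod m) : ℕ :=
  ∑ i : Fin s,
    if ∃ j, j ≠ i ∧ P.le i j ∧ 0 < blockWt m s π u j then m / 2
    else blockWt m s π u i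

/-- The pomset block distance. -/
def pomsetDist (m s : ℕ) (P : PartialOrder (Fin s)) (π : Fin s → ℕ)
    (u v : ∀ i : Fin s, Fin (π i) → ZMod m) : ℕ :=
  pomsetWt m s P π (u - v)

/-- An ideal of the pomset `𝕡`, given by its count function `I : [s] → {0,…,⌊m/2⌋}`. -/
def IsIdeal (m s : ℕ) (P : PartialOrder (Fin s)) (I : Fin s → ℕ) : Prop :=
  (∀ a, I a ≤ m / 2) ∧ ∀ a b, 0 < I a → P.le b a → b ≠ a → I b = m / 2

/-- An ideal has full count if every element of its root set has count `⌊m/2⌋`. -/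
def FullCount (m : ℕ) {s : ℕ} (I : Fin s → ℕ) : Prop :=
  ∀ a, 0 < I a → I a = m / 2

/-- The cardinality `|I|` of an ideal. -/
def idealCard {s : ℕ} (I : Fin s → ℕ) : ℕ := ∑ a, I a

/-- The cardinality `|I*|` of the root set of an ideal. -/
def rootCard {s : ℕ} (I : Fin s → ℕ) : ℕ :=
  (Finset.univ.filter fun a => 0 < I a).card

/-- `Σ_{i ∈ I*} k_i`. -/
def rootSum {s : ℕ} (π I : Fin s → ℕ) : ℕ :=
  ∑ a ∈ Finset.univ.filter (fun a => 0 < I a), π a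

/-- The `I`-ball centered at `u`. -/
def ballI (m s : ℕ) (π : Fin s → ℕ) (I : Fin s → ℕ)
    (u : ∀ i : Fin s, Fin (π i) → ZMod m) :
    Set (∀ i : Fin s, Fin (π i) → ZMod m) :=
  {v | ∀ i, blockWt m s π (u - v) i ≤ I i}

/-- `𝒞` is `I`-perfect: the `I`-balls centered at codewords are pairwise
disjoint and cover the whole space. -/
def IPerfect (m s : ℕ) (π : Fin s → ℕ) (I : Fin s → ℕ)
    (C : Set (∀ i : Fin s, Fin (π i) → ZMod m)) : Prop :=
  (C.Pairwise fun c c' => Disjoint (ballI m s π I c) (ballI m s π I c')) ∧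
  (⋃ c ∈ C, ballI m s π I c) = Set.univ

/-- The `r`-ball centered at `u`. -/
def ballR (m s : ℕ) (P : PartialOrder (Fin s)) (π : Fin s → ℕ) (r : ℕ)
    (u : ∀ i : Fin s, Fin (π i) → ZMod m) :
    Set (∀ i : Fin s, Fin (π i) → ZMod m) :=
  {v | pomsetDist m s P π u v ≤ r}

/-- The standard dot product on `ℤ_m^n`. -/
def dotProd (m s : ℕ) (π : Fin s → ℕ)
    (c v : ∀ i : Fin s, Fin (π i) → ZMod m) : ZMod m :=
  ∑ i, ∑ t, c i t * v i t

/-- The dual code `𝒞^⊥`. -/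
def dualCode (m s : ℕ) (π : Fin s → ℕ)
    (C : Set (∀ i : Fin s, Fin (π i) → ZMod m)) :
    Set (∀ i : Fin s, Fin (π i) → ZMod m) :=
  {v | ∀ c ∈ C, dotProd m s π c v = 0}

/-- The dual pomset, encoded by the opposite partial order. -/
def dualOrder (s : ℕ) (P : PartialOrder (Fin s)) : PartialOrder (Fin s) where
  le a b := P.le b a
  lt a b := P.lt b a
  le_refl a := P.le_refl a
  le_trans a b c h1 h2 := P.le_trans _ _ _ h2 h1
  lt_iff_le_not_ge a b := P.lt_iff_le_not_ge b a
  le_antisymm a b h1 h2 := (P.le_antisymm _ _ h1 h2).symm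

/-- The minimum `(𝕡,π)`-distance of a code. -/
def minDist (m s : ℕ) (P : PartialOrder (Fin s)) (π : Fin s → ℕ)
    (C : Set (∀ i : Fin s, Fin (π i) → ZMod m)) : ℕ :=
  sInf {r | ∃ c ∈ C, ∃ c' ∈ C, c ≠ c' ∧ r = pomsetWt m s P π (c - c')}

/-- `𝒞` is an MDS `(𝕡,π)`-code: it attains the Singleton bound
`n − ⌈log_m K⌉ ≥ max { Σ_{i∈I*} k_i : I ideal, |I*| = ⌊(d−1)/⌊m/2⌋⌋ }`. -/
def IsMDS (m s : ℕ) (P : PartialOrder (Fin s)) (π : Fin s → ℕ)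
    (C : Set (∀ i : Fin s, Fin (π i) → ZMod m)) : Prop :=
  (∀ I, IsIdeal m s P I →
      rootCard I = (minDist m s P π C - 1) / (m / 2) →
      rootSum π I ≤ (∑ i, π i) - Nat.clog m (Nat.card ↥C)) ∧
  (∃ I, IsIdeal m s P I ∧
      rootCard I = (minDist m s P π C - 1) / (m / 2) ∧
      rootSum π I = (∑ i, π i) - Nat.clog m (Nat.card ↥C))

/-- The chain pomset on `[s]`: the usual total order on `Fin s`. -/
def chainOrder (s : ℕ) : PartialOrder (Fin s) := inferInstance

/-!
When `I` has full count, the bound `blockWt ≤ I i` is vacuous at the roots of `I` and forces the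
block to vanish elsewhere. So the `I`-ball around `0` is the group `K` of vectors supported on `I*`,
and the `I`-ball around `u` is the coset `u + K`. Each of the three conditions says that `C` and `K`
are complements, i.e. that addition `C × K → ℤ_m^n` is bijective: (1) says that the translates
`c + K` tile the space, (3) that `C` is a transversal of `K`, and (2) that `|C| |K| = m ^ n` and
`C ∩ K = 0`.
-/

section Complement

open scoped Pointwise

variable {G : Type*} [AddGroup G]

theorem isComplement_iff_pairwiseDisjoint_vadd_and_iUnion_vadd_eq_univ {S T : Set G} :
    AddSubgroup.IsComplement S T ↔
      S.PairwiseDisjoint (· +ᵥ T) ∧ ⋃ g ∈ S, g +ᵥ T = Set.univ := by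
  refine ⟨fun h => ⟨h.pairwiseDisjoint_vadd, ?_⟩, fun ⟨hdisj, hcover⟩ => ?_⟩
  · rw [Set.iUnion_vadd_set, vadd_eq_add, h.add_eq]
  · rw [AddSubgroup.isComplement_iff_existsUnique_neg_add_mem]
    intro g
    obtain ⟨c, hc, hgc⟩ := Set.mem_iUnion₂.1 (hcover ▸ Set.mem_univ g)
    refine ⟨⟨c, hc⟩, Set.mem_vadd_set_iff_neg_vadd_mem.1 hgc, fun c' hgc' => Subtype.ext ?_⟩
    exact hdisj.elim_set c'.2 hc g (Set.mem_vadd_set_iff_neg_vadd_mem.2 hgc') hgc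

theorem isComplement_iff_natCard_inter_vadd_eq_one {S : Set G} {H : AddSubgroup G} :
    AddSubgroup.IsComplement S H ↔ ∀ g : G, Nat.card ↥(S ∩ (g +ᵥ (H : Set G))) = 1 := by
  rw [AddSubgroup.isComplement_iff_existsUnique_neg_add_mem]
  refine forall_congr' fun g => ?_
  have mem_coset (x : G) : x ∈ g +ᵥ (H : Set G) ↔ -x + g ∈ (H : Set G) := by
    rw [Set.mem_vadd_set_iff_neg_vadd_mem, vadd_eq_add, SetLike.mem_coe, SetLike.mem_coe,
      ← neg_mem_iff, neg_add_rev, neg_neg]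
  rw [Nat.card_coe_set_eq, Set.ncard_eq_one]
  simp only [Set.eq_singleton_iff_unique_mem, Set.mem_inter_iff, mem_coset, ExistsUnique,
    Subtype.exists, Subtype.forall, Subtype.mk.injEq, and_imp, exists_prop, and_assoc]

theorem addSubgroup_isComplement'_iff_card_mul_and_disjoint [Finite G] {H K : AddSubgroup G} :
    AddSubgroup.IsComplement' H K ↔ Nat.card H * Nat.card K = Nat.card G ∧ Disjoint H K := by
  rw [AddSubgroup.isComplement'_def, AddSubgroup.isComplement_iff_bijective,
    Nat.bijective_iff_injective_and_card, Nat.card_prod, and_comm]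
  refine and_congr_right fun _ => ⟨fun hinj => ?_, AddSubgroup.add_injective_of_disjoint⟩
  refine AddSubgroup.disjoint_def.2 fun {x} hxH hxK => ?_
  have hpair := @hinj (⟨x, hxH⟩, 0) (0, ⟨x, hxK⟩) (by simp)
  exact congrArg (fun p => (p.1 : G)) hpair

theorem natCard_inter_eq_one_iff_disjoint {H K : AddSubgroup G} :
    Nat.card ↥((H : Set G) ∩ K) = 1 ↔ Disjoint H K := by
  rw [← AddSubgroup.coe_inf, disjoint_iff]
  exact AddSubgroup.card_eq_one

end Complement

theorem natCard_addSubgroup_pi_univ {ι : Type*} [Fintype ι] {G : ι → Type*}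
    [∀ i, AddGroup (G i)] (H : ∀ i, AddSubgroup (G i)) :
    Nat.card (AddSubgroup.pi Set.univ H) = ∏ i, Nat.card (H i) :=
  (Nat.card_congr (Equiv.Set.univPi fun i => (H i : Set (G i)))).trans Nat.card_pi

theorem leeWt_eq_zero {m : ℕ} [NeZero m] {a : ZMod m} : leeWt m a = 0 ↔ a = 0 := by
  have := a.val_lt
  rw [← ZMod.val_eq_zero, leeWt]
  omega

theorem leeWt_le_half (m : ℕ) (a : ZMod m) : leeWt m a ≤ m / 2 := by
  rw [leeWt]
  omega

section Blocks

variable {m s : ℕ} {π : Fin s → ℕ}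

theorem blockWt_eq_zero [NeZero m] {u : ∀ i, Fin (π i) → ZMod m} {i : Fin s} :
    blockWt m s π u i = 0 ↔ u i = 0 := by
  rw [← Nat.le_zero, blockWt, Finset.sup_le_iff]
  simp [leeWt_eq_zero, funext_iff]

theorem blockWt_le_half (u : ∀ i, Fin (π i) → ZMod m) (i : Fin s) :
    blockWt m s π u i ≤ m / 2 :=
  Finset.sup_le fun _ _ => leeWt_le_half m _

variable (m π) in
/-- The vectors of `ℤ_m^n` supported on the root set `I*`, as a product of one subgroup per block:
everything at the roots of `I`, zero elsewhere. For `I` of full count this is the ball `B_I`. -/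
def rootSubgroup (I : Fin s → ℕ) : AddSubgroup (∀ i, Fin (π i) → ZMod m) :=
  AddSubgroup.pi Set.univ fun i => if 0 < I i then ⊤ else ⊥

theorem mem_rootSubgroup {I : Fin s → ℕ} {u : ∀ i, Fin (π i) → ZMod m} :
    u ∈ rootSubgroup m π I ↔ ∀ i, I i = 0 → u i = 0 := by
  refine (AddSubgroup.mem_pi _).trans (forall_congr' fun i => ?_)
  rcases Nat.eq_zero_or_pos (I i) with hi | hi
  · simp [hi]
  · simp [hi, hi.ne']

theorem natCard_rootSubgroup (m : ℕ) (π I : Fin s → ℕ) :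
    Nat.card (rootSubgroup m π I) = m ^ rootSum π I := by
  have card_block (i : Fin s) :
      Nat.card (if 0 < I i then ⊤ else ⊥ : AddSubgroup (Fin (π i) → ZMod m)) =
        if 0 < I i then m ^ π i else 1 := by
    split_ifs <;> simp [Nat.card_pi]
  rw [rootSubgroup, natCard_addSubgroup_pi_univ, Finset.prod_congr rfl fun i _ => card_block i,
    ← Finset.prod_filter, Finset.prod_pow_eq_pow_sum, rootSum]

theorem natCard_blocks (m : ℕ) (π : Fin s → ℕ) :
    Nat.card (∀ i, Fin (π i) → ZMod m) = m ^ ∑ i, π i := by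
  simp [Nat.card_pi, Finset.prod_pow_eq_pow_sum]

theorem natCard_mul_natCard_rootSubgroup_eq_iff (hm : 2 ≤ m) {k : ℕ} {I : Fin s → ℕ}
    {C : AddSubgroup (∀ i, Fin (π i) → ZMod m)} (hC : Nat.card C = m ^ k) :
    Nat.card C * Nat.card (rootSubgroup m π I) = Nat.card (∀ i, Fin (π i) → ZMod m) ↔
      rootSum π I = (∑ i, π i) - k := by
  have : NeZero m := ⟨by omega⟩
  have hk : k ≤ ∑ i, π i := by
    rw [← Nat.pow_le_pow_iff_right hm, ← hC, ← natCard_blocks]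
    exact AddSubgroup.card_le_card_addGroup C
  rw [hC, natCard_rootSubgroup, natCard_blocks, ← pow_add, Nat.pow_right_inj hm]
  omega

variable [NeZero m] {I : Fin s → ℕ}

theorem FullCount.mem_ballI (hI : FullCount m I) {u v : ∀ i, Fin (π i) → ZMod m} :
    v ∈ ballI m s π I u ↔ u - v ∈ rootSubgroup m π I := by
  refine (forall_congr' fun i => ?_).trans mem_rootSubgroup.symm
  rcases Nat.eq_zero_or_pos (I i) with hi | hi
  · simp [hi, blockWt_eq_zero]
  · simp [hI i hi, blockWt_le_half, (hI i hi ▸ hi).ne']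

open scoped Pointwise in
theorem FullCount.ballI_eq_vadd (hI : FullCount m I) (u : ∀ i, Fin (π i) → ZMod m) :
    ballI m s π I u = u +ᵥ (rootSubgroup m π I : Set (∀ i, Fin (π i) → ZMod m)) := by
  ext v
  rw [hI.mem_ballI, Set.mem_vadd_set_iff_neg_vadd_mem, vadd_eq_add, neg_add_eq_sub,
    SetLike.mem_coe, sub_mem_comm_iff]

theorem FullCount.iPerfect_iff_isComplement (hI : FullCount m I)
    {C : Set (∀ i, Fin (π i) → ZMod m)} :
    IPerfect m s π I C ↔ AddSubgroup.IsComplement C (rootSubgroup m π I) := by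
  simp only [isComplement_iff_pairwiseDisjoint_vadd_and_iUnion_vadd_eq_univ, IPerfect,
    hI.ballI_eq_vadd, Set.PairwiseDisjoint]

theorem FullCount.natCard_inter_ballI_eq_one_iff_isComplement (hI : FullCount m I)
    {C : Set (∀ i, Fin (π i) → ZMod m)} :
    (∀ u, Nat.card ↥(C ∩ ballI m s π I u) = 1) ↔
      AddSubgroup.IsComplement C (rootSubgroup m π I) := by
  simp only [isComplement_iff_natCard_inter_vadd_eq_one, hI.ballI_eq_vadd]

open scoped Pointwise in
theorem FullCount.natCard_inter_ballI_zero_eq_one_iff_disjoint (hI : FullCount m I)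
    {C : AddSubgroup (∀ i, Fin (π i) → ZMod m)} :
    Nat.card ↥((C : Set (∀ i, Fin (π i) → ZMod m)) ∩ ballI m s π I 0) = 1 ↔
      Disjoint C (rootSubgroup m π I) := by
  rw [hI.ballI_eq_vadd, zero_vadd, natCard_inter_eq_one_iff_disjoint]

end Blocks

theorem I_perfect_tfae_general {m s k : ℕ} (hm : 2 ≤ m) {π I : Fin s → ℕ} (hI : FullCount m I)
    {C : AddSubgroup (∀ i, Fin (π i) → ZMod m)} (hC : Nat.card C = m ^ k) :
    [IPerfect m s π I (C : Set (∀ i, Fin (π i) → ZMod m)),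
     rootSum π I = (∑ i, π i) - k ∧
       Nat.card ↥((C : Set (∀ i, Fin (π i) → ZMod m)) ∩ ballI m s π I 0) = 1,
     ∀ u, Nat.card ↥((C : Set (∀ i, Fin (π i) → ZMod m)) ∩ ballI m s π I u) = 1
    ].TFAE := by
  have : NeZero m := ⟨by omega⟩
  tfae_have 1 ↔ 3 :=
    hI.iPerfect_iff_isComplement.trans hI.natCard_inter_ballI_eq_one_iff_isComplement.symm
  tfae_have 2 ↔ 3 := by
    rw [← natCard_mul_natCard_rootSubgroup_eq_iff hm hC,
      hI.natCard_inter_ballI_zero_eq_one_iff_disjoint,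
      hI.natCard_inter_ballI_eq_one_iff_isComplement,
      ← addSubgroup_isComplement'_iff_card_mul_and_disjoint]
  tfae_finish

/-- equivalent characterizations of `I`-perfect linear codes. -/
theorem I_perfect_tfae
    (m s : ℕ) (hm : 4 ≤ m) (hs : 1 ≤ s)
    (P : PartialOrder (Fin s)) (π : Fin s → ℕ) (hπ : ∀ i, 0 < π i)
    (n k d : ℕ) (hn : n = ∑ i, π i)
    (C : Submodule (ZMod m) (∀ i : Fin s, Fin (π i) → ZMod m))
    (hcard : Nat.card ↥C = m ^ k)
    (hd : IsLeast {r | ∃ c ∈ (C : Set (∀ i : Fin s, Fin (π i) → ZMod m)),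
      ∃ c' ∈ (C : Set (∀ i : Fin s, Fin (π i) → ZMod m)), c ≠ c' ∧
        r = pomsetWt m s P π (c - c')} d)
    (I : Fin s → ℕ) (hI : IsIdeal m s P I) (hfull : FullCount m I) :
    [IPerfect m s π I (C : Set (∀ i : Fin s, Fin (π i) → ZMod m)),
     rootSum π I = n - k ∧
       Nat.card ↥((C : Set (∀ i : Fin s, Fin (π i) → ZMod m)) ∩ ballI m s π I 0) = 1,
     ∀ u, Nat.card ↥((C : Set (∀ i : Fin s, Fin (π i) → ZMod m)) ∩ ballI m s π I u) = 1
    ].TFAE := by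
  subst hn
  exact I_perfect_tfae_general (C := C.toAddSubgroup) (by omega) hfull hcard

end
end

section
/- (Singleton bound) Let 𝒞 ⊆ ℤ_m^n be an (n, K, d) (𝕡,π)-code and set r = ⌊(d−1)/l⌋. Then n − ⌈log_m K⌉ ≥ max{Σ_{i∈I*} k_i : I an ideal of 𝕡 with |I*| = r}. -/
open scoped Classical

noncomputable section

/-!
Two codewords that agree outside the root set `I*` of an ideal differ by a vector supported on
`I*`. As `I*` is a down-set, such a vector has weight at most `|I*| ⌊m/2⌋ ≤ d - 1`, so the two
codewords coincide. Deleting the blocks in `I*` is therefore injective on the code, which bounds `K`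
by the number `m ^ (n - ∑_{i ∈ I*} k_i)` of punctured words.
-/

section Weights

variable {m s : ℕ} {π : Fin s → ℕ}

theorem leeWt_le (a : ZMod m) : leeWt m a ≤ m / 2 := by
  unfold leeWt
  omega

theorem leeWt_eq_zero_iff [NeZero m] {a : ZMod m} : leeWt m a = 0 ↔ a = 0 := by
  have hlt : a.val < m := a.val_lt
  rw [← ZMod.val_eq_zero, leeWt]
  omega

theorem blockWt_le (u : ∀ i : Fin s, Fin (π i) → ZMod m) (i : Fin s) :
    blockWt m s π u i ≤ m / 2 :=
  Finset.sup_le fun _ _ => leeWt_le _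

theorem blockWt_eq_zero_iff [NeZero m] {u : ∀ i : Fin s, Fin (π i) → ZMod m} {i : Fin s} :
    blockWt m s π u i = 0 ↔ u i = 0 := by
  rw [blockWt, ← Nat.bot_eq_zero, Finset.sup_eq_bot_iff, funext_iff]
  simp only [Finset.mem_univ, true_imp_iff, Nat.bot_eq_zero, leeWt_eq_zero_iff, Pi.zero_apply]

theorem blockWt_le_pomsetWt (P : PartialOrder (Fin s)) (u : ∀ i : Fin s, Fin (π i) → ZMod m)
    (i : Fin s) : blockWt m s π u i ≤ pomsetWt m s P π u := by
  refine le_trans ?_ (Finset.single_le_sum (fun _ _ => Nat.zero_le _) (Finset.mem_univ i))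
  split_ifs
  exacts [blockWt_le u i, le_rfl]

theorem pomsetWt_pos [NeZero m] (P : PartialOrder (Fin s))
    {u : ∀ i : Fin s, Fin (π i) → ZMod m} (hu : u ≠ 0) : 0 < pomsetWt m s P π u := by
  obtain ⟨i, hi⟩ := Function.ne_iff.mp hu
  exact (Nat.pos_of_ne_zero (blockWt_eq_zero_iff.not.mpr hi)).trans_le (blockWt_le_pomsetWt P u i)

theorem pomsetWt_le_card_mul_of_isLowerSet [NeZero m] {P : PartialOrder (Fin s)}
    {S : Finset (Fin s)} (hS : @IsLowerSet _ P.toLE (S : Set (Fin s)))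
    {u : ∀ i : Fin s, Fin (π i) → ZMod m} (hu : ∀ i ∉ S, u i = 0) :
    pomsetWt m s P π u ≤ S.card * (m / 2) := by
  have mem_of_pos {j : Fin s} (hj : 0 < blockWt m s π u j) : j ∈ S := by
    contrapose! hj
    exact (blockWt_eq_zero_iff.mpr (hu j hj)).le
  rw [pomsetWt, ← Finset.sum_subset S.subset_univ]
  · refine Finset.sum_le_card_nsmul _ _ _ fun i _ => ?_
    split_ifs
    exacts [le_rfl, blockWt_le u i]
  · intro i _ hi
    rw [if_neg, blockWt_eq_zero_iff.mpr (hu i hi)]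
    rintro ⟨j, -, hij, hj⟩
    exact hi (hS hij (mem_of_pos hj))

end Weights

section SingletonBound

theorem card_le_pow_sum_of_injOn_restrict {ι α : Type*} [Finite α] {π : ι → ℕ} {S : Finset ι}
    {C : Set (∀ i, Fin (π i) → α)} (hC : Set.InjOn S.restrict C) :
    Nat.card C ≤ Nat.card α ^ ∑ i ∈ S, π i :=
  calc
    Nat.card C ≤ Nat.card (∀ i : S, Fin (π i) → α) := Nat.card_le_card_of_injective _ hC.injective
    _ = ∏ i : S, Nat.card α ^ π i := by
      simp only [Nat.card_pi, Finset.prod_const, Finset.card_univ, Fintype.card_fin]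
    _ = Nat.card α ^ ∑ i ∈ S, π i := by
      rw [Finset.prod_pow_eq_pow_sum, Finset.sum_coe_sort]

variable {m s : ℕ} {P : PartialOrder (Fin s)}

theorem injOn_restrict_compl_of_isLowerSet [NeZero m] {π : Fin s → ℕ}
    {C : Set (∀ i : Fin s, Fin (π i) → ZMod m)} {d : ℕ}
    (hd : C.Pairwise fun c c' => d ≤ pomsetDist m s P π c c') {S : Finset (Fin s)}
    (hS : @IsLowerSet _ P.toLE (S : Set (Fin s))) (hcard : S.card ≤ (d - 1) / (m / 2)) :
    Set.InjOn Sᶜ.restrict C := by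
  intro c hc c' hc' hcc'
  by_contra hne
  have hsupp : ∀ i ∉ S, (c - c') i = 0 := fun i hi =>
    sub_eq_zero.mpr (congrFun hcc' ⟨i, Finset.mem_compl.mpr hi⟩)
  have hle : pomsetWt m s P π (c - c') ≤ d - 1 :=
    (pomsetWt_le_card_mul_of_isLowerSet hS hsupp).trans (Nat.mul_le_of_le_div _ _ _ hcard)
  have hge : d ≤ pomsetWt m s P π (c - c') := hd hc hc' hne
  have hpos : 0 < pomsetWt m s P π (c - c') := pomsetWt_pos P (sub_ne_zero.mpr hne)
  omega

/-- The root set `I*` of an ideal with count function `I`. -/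
def rootSet (I : Fin s → ℕ) : Finset (Fin s) := {a | 0 < I a}

theorem IsIdeal.isLowerSet_rootSet {I : Fin s → ℕ} (hm : 1 < m) (hI : IsIdeal m s P I) :
    @IsLowerSet _ P.toLE (rootSet I : Set (Fin s)) := by
  intro a b hba ha
  simp only [rootSet, Finset.mem_coe, Finset.mem_filter_univ] at ha ⊢
  by_cases hne : b = a
  · rwa [hne]
  · rw [hI.2 a b ha hba hne]
    omega

theorem singleton_bound_general (hm : 1 < m) {π : Fin s → ℕ}
    {C : Set (∀ i : Fin s, Fin (π i) → ZMod m)} {d : ℕ}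
    (hd : C.Pairwise fun c c' => d ≤ pomsetDist m s P π c c') {I : Fin s → ℕ}
    (hI : IsIdeal m s P I) (hr : rootCard I ≤ (d - 1) / (m / 2)) :
    rootSum π I + Nat.clog m (Nat.card C) ≤ ∑ i, π i := by
  have : NeZero m := ⟨by omega⟩
  have hinj : Set.InjOn (rootSet I)ᶜ.restrict C :=
    injOn_restrict_compl_of_isLowerSet hd (hI.isLowerSet_rootSet hm) hr
  have hcard : Nat.card C ≤ m ^ ∑ i ∈ (rootSet I)ᶜ, π i := by
    simpa only [Nat.card_zmod] using card_le_pow_sum_of_injOn_restrict hinj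
  calc
    rootSum π I + Nat.clog m (Nat.card C)
      ≤ ∑ i ∈ rootSet I, π i + ∑ i ∈ (rootSet I)ᶜ, π i :=
        Nat.add_le_add_left ((Nat.clog_le_iff_le_pow hm).mpr hcard) _
    _ = ∑ i, π i := Finset.sum_add_sum_compl _ _

end SingletonBound

/-- Singleton bound: `n − ⌈log_m K⌉ ≥ Σ_{i∈I*} k_i` for every ideal
`I` with `|I*| = ⌊(d−1)/⌊m/2⌋⌋`. -/
theorem singleton_bound
    (m s : ℕ) (hm : 4 ≤ m) (hs : 1 ≤ s)
    (P : PartialOrder (Fin s)) (π : Fin s → ℕ) (hπ : ∀ i, 0 < π i)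
    (n K d : ℕ) (hn : n = ∑ i, π i)
    (C : Set (∀ i : Fin s, Fin (π i) → ZMod m))
    (hK : Nat.card ↥C = K) (hK2 : 2 ≤ K)
    (hd : IsLeast {r | ∃ c ∈ C, ∃ c' ∈ C, c ≠ c' ∧
      r = pomsetWt m s P π (c - c')} d) :
    ∀ I, IsIdeal m s P I → rootCard I = (d - 1) / (m / 2) →
      rootSum π I ≤ n - Nat.clog m K := by
  subst hn hK
  exact fun I hI hr => Nat.le_sub_of_add_le <| singleton_bound_general (by omega)
    (fun c hc c' hc' hne => hd.2 ⟨c, hc, c', hc', hne, rfl⟩) hI hr.le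

end
end
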